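/- Let A be an artin algebra and assume that every simple module S is a submodule of a finitely generated module M_S of finite projective dimension. Let d = max over simple S of pd M_S. Then Fin-inj A ≤ del A ≤ d ≤ fin-pro A. -/

import Mathlib

open CategoryTheory CategoryTheory.Limits

noncomputable section

namespace ArtinAlg

variable (A : Type) [Ring A]

/-- `M` admits a projective resolution of length at most `n`. -/
inductive ProjDimLE : ℕ → ModuleCat.{0} A → Prop
  | zero (M : ModuleCat.{0} A) (h : Projective M) : ProjDimLE 0 M
  | succ (n : ℕ) (M P : ModuleCat.{0} A) (f : P ⟶ M) (hP : Projective P) (hf : Epi f)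
      (h : ProjDimLE n (kernel f)) : ProjDimLE (n + 1) M

/-- `M` admits an injective coresolution of length at most `n`. -/
inductive InjDimLE : ℕ → ModuleCat.{0} A → Prop
  | zero (M : ModuleCat.{0} A) (h : Injective M) : InjDimLE 0 M
  | succ (n : ℕ) (M I : ModuleCat.{0} A) (f : M ⟶ I) (hI : Injective I) (hf : Mono f)
      (h : InjDimLE n (cokernel f)) : InjDimLE (n + 1) M

/-- The projective dimension `pd M ∈ ℕ∞`. -/
def projDim (M : ModuleCat.{0} A) : ℕ∞ :=
  sInf {d : ℕ∞ | ∃ n : ℕ, d = n ∧ ProjDimLE A n M}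

/-- The injective dimension `id M ∈ ℕ∞`. -/
def injDim (M : ModuleCat.{0} A) : ℕ∞ :=
  sInf {d : ℕ∞ | ∃ n : ℕ, d = n ∧ InjDimLE A n M}

/-- `f : P ⟶ M` is a projective cover: `P` is projective and `f` is an essential
(superfluous) epimorphism. -/
def IsProjectiveCoverHom {P M : ModuleCat.{0} A} (f : P ⟶ M) : Prop :=
  Projective P ∧ Epi f ∧ ∀ (N : ModuleCat.{0} A) (g : N ⟶ P), Epi (g ≫ f) → Epi g

/-- `P` is a projective cover of `M`. -/
def IsProjCoverOf (M P : ModuleCat.{0} A) : Prop :=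
  ∃ f : P ⟶ M, IsProjectiveCoverHom A f

/-- `f : M ⟶ I` is an injective envelope: `I` is injective and `f` is an essential
monomorphism. -/
def IsInjectiveEnvelopeHom {M I : ModuleCat.{0} A} (f : M ⟶ I) : Prop :=
  Injective I ∧ Mono f ∧ ∀ (N : ModuleCat.{0} A) (g : I ⟶ N), Mono (f ≫ g) → Mono g

/-- `I` is an injective envelope of `M`. -/
def IsInjEnvOf (M I : ModuleCat.{0} A) : Prop :=
  ∃ f : M ⟶ I, IsInjectiveEnvelopeHom A f

/-- `X ≅ Ω M`, the kernel of a projective cover of `M`. -/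
def IsSyzygyOf (M X : ModuleCat.{0} A) : Prop :=
  ∃ (P : ModuleCat.{0} A) (f : P ⟶ M), IsProjectiveCoverHom A f ∧ Nonempty (X ≅ kernel f)

/-- `X ≅ Σ M`, the cokernel of an injective envelope of `M`. -/
def IsCosyzygyOf (M X : ModuleCat.{0} A) : Prop :=
  ∃ (I : ModuleCat.{0} A) (f : M ⟶ I), IsInjectiveEnvelopeHom A f ∧ Nonempty (X ≅ cokernel f)

/-- `X ≅ Ω^n M`. -/
def IsNthSyzygy : ℕ → ModuleCat.{0} A → ModuleCat.{0} A → Prop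
  | 0, M, X => Nonempty (X ≅ M)
  | n + 1, M, X => ∃ Y, IsSyzygyOf A M Y ∧ IsNthSyzygy n Y X

/-- `X ≅ Σ^n M`. -/
def IsNthCosyzygy : ℕ → ModuleCat.{0} A → ModuleCat.{0} A → Prop
  | 0, M, X => Nonempty (X ≅ M)
  | n + 1, M, X => ∃ Y, IsCosyzygyOf A M Y ∧ IsNthCosyzygy n Y X

/-- `X` is a direct summand of `Y`. -/
def IsDirectSummandOf (X Y : ModuleCat.{0} A) : Prop :=
  ∃ (i : X ⟶ Y) (r : Y ⟶ X), i ≫ r = 𝟙 X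

/-- `X ∈ add W` : `X` is a direct summand of a finite direct sum of copies of `W`. -/
def InAdd (X W : ModuleCat.{0} A) : Prop :=
  ∃ n : ℕ, IsDirectSummandOf A X (ModuleCat.of A (Fin n → ↥W))

/-- The delooping level of `M` is at most `d` :
`Ω^d M ∈ add (A ⊕ Ω^{d+1} M')` for some finitely generated `M'`. -/
def DelLE (d : ℕ) (M : ModuleCat.{0} A) : Prop :=
  ∃ X, IsNthSyzygy A d M X ∧
    ∃ M' : ModuleCat.{0} A, Module.Finite A ↥M' ∧
      ∃ X', IsNthSyzygy A (d + 1) M' X' ∧ InAdd A X (ModuleCat.of A (A × ↥X'))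

/-- The delooping level `del M ∈ ℕ∞`. -/
def delLevel (M : ModuleCat.{0} A) : ℕ∞ :=
  sInf {d : ℕ∞ | ∃ n : ℕ, d = n ∧ DelLE A n M}

/-- The delooping level of the algebra: the supremum of `del S` over the simple modules. -/
def delAlg : ℕ∞ :=
  sSup {d : ℕ∞ | ∃ S : ModuleCat.{0} A, IsSimpleModule A ↥S ∧ delLevel A S = d}

/-- `Q` is a minimal injective cogenerator: the injective envelope of the direct sum of
a complete set of representatives of the simple modules. -/
def IsMinimalInjectiveCogenerator (Q : ModuleCat.{0} A) : Prop :=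
  ∃ (ι : Type) (_ : Fintype ι) (S : ι → ModuleCat.{0} A),
    (∀ i, IsSimpleModule A ↥(S i)) ∧
    (∀ T : ModuleCat.{0} A, IsSimpleModule A ↥T → ∃! i, Nonempty (↥T ≃ₗ[A] ↥(S i))) ∧
    IsInjEnvOf A (ModuleCat.of A (∀ i, ↥(S i))) Q

/-- The desuspending level of `M` is at most `d` :
`Σ^d M ∈ add (D(A) ⊕ Σ^{d+1} M')` for some finitely generated `M'`. -/
def DesLE (d : ℕ) (M : ModuleCat.{0} A) : Prop :=
  ∃ X, IsNthCosyzygy A d M X ∧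
    ∃ Q, IsMinimalInjectiveCogenerator A Q ∧
      ∃ M' : ModuleCat.{0} A, Module.Finite A ↥M' ∧
        ∃ X', IsNthCosyzygy A (d + 1) M' X' ∧ InAdd A X (ModuleCat.of A (↥Q × ↥X'))

/-- The desuspending level `des M ∈ ℕ∞`. -/
def desLevel (M : ModuleCat.{0} A) : ℕ∞ :=
  sInf {d : ℕ∞ | ∃ n : ℕ, d = n ∧ DesLE A n M}

/-- The desuspending level of the algebra. -/
def desAlg : ℕ∞ :=
  sSup {d : ℕ∞ | ∃ S : ModuleCat.{0} A, IsSimpleModule A ↥S ∧ desLevel A S = d}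

/-- The (small) finitistic projective dimension `fin-pro A`. -/
def finProDim : ℕ∞ :=
  sSup {d : ℕ∞ | ∃ M : ModuleCat.{0} A, Module.Finite A ↥M ∧ projDim A M = d ∧ d ≠ ⊤}

/-- The (small) finitistic injective dimension `fin-inj A`. -/
def finInjDim : ℕ∞ :=
  sSup {d : ℕ∞ | ∃ M : ModuleCat.{0} A, Module.Finite A ↥M ∧ injDim A M = d ∧ d ≠ ⊤}

/-- The big finitistic projective dimension `Fin-pro A`. -/
def bigFinProDim : ℕ∞ :=
  sSup {d : ℕ∞ | ∃ M : ModuleCat.{0} A, projDim A M = d ∧ d ≠ ⊤}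

/-- The big finitistic injective dimension `Fin-inj A`. -/
def bigFinInjDim : ℕ∞ :=
  sSup {d : ℕ∞ | ∃ M : ModuleCat.{0} A, injDim A M = d ∧ d ≠ ⊤}

/-- `M` is an indecomposable nonzero module. -/
def Indec (M : ModuleCat.{0} A) : Prop :=
  Nontrivial ↥M ∧ ∀ (N₁ N₂ : Submodule A ↥M), IsCompl N₁ N₂ → N₁ = ⊥ ∨ N₂ = ⊥

/-- `M` is serial (uniserial): its submodules form a chain. -/
def IsUniserial (M : ModuleCat.{0} A) : Prop :=
  ∀ N₁ N₂ : Submodule A ↥M, N₁ ≤ N₂ ∨ N₂ ≤ N₁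

/-- `A` is a Nakayama algebra: all finitely generated indecomposable modules are serial. -/
def IsNakayama : Prop :=
  ∀ M : ModuleCat.{0} A, Module.Finite A ↥M → Indec A M → IsUniserial A M

/-- `A` is connected: it is not a nontrivial product of algebras. -/
def IsConnectedAlgebra : Prop :=
  Nontrivial A ∧ ∀ e : A, IsIdempotentElem e → e ∈ Set.center A → e = 0 ∨ e = 1

/-- `A` is a cyclic Nakayama algebra: connected Nakayama with no simple projective module. -/
def IsCyclicNakayama : Prop :=
  IsNakayama A ∧ IsConnectedAlgebra A ∧
    ¬ ∃ S : ModuleCat.{0} A, IsSimpleModule A ↥S ∧ Projective S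

/-- `T ≅ top M` (and `top M` is simple): there is an essential epimorphism `M ⟶ T`. -/
def IsSimpleTopOf (M T : ModuleCat.{0} A) : Prop :=
  IsSimpleModule A ↥T ∧
    ∃ f : M ⟶ T, Epi f ∧ ∀ (N : ModuleCat.{0} A) (g : N ⟶ M), Epi (g ≫ f) → Epi g

/-- `S ≅ soc M` (and `soc M` is simple): there is an essential monomorphism `S ⟶ M`. -/
def IsSimpleSocOf (M S : ModuleCat.{0} A) : Prop :=
  IsSimpleModule A ↥S ∧
    ∃ f : S ⟶ M, Mono f ∧ ∀ (N : ModuleCat.{0} A) (g : M ⟶ N), Mono (f ≫ g) → Mono g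

/-- `0 ⟶ N ⟶ E ⟶ M ⟶ 0` is an almost split (Auslander-Reiten) sequence. -/
def IsAlmostSplitSeq {N E M : ModuleCat.{0} A} (f : N ⟶ E) (g : E ⟶ M) : Prop :=
  Mono f ∧ Epi g ∧ (∃ w : f ≫ g = 0, (ShortComplex.mk f g w).Exact) ∧
  (¬ ∃ s : M ⟶ E, s ≫ g = 𝟙 M) ∧ Indec A N ∧ Indec A M ∧
  ∀ (X : ModuleCat.{0} A) (h : X ⟶ M), (¬ ∃ s : M ⟶ X, s ≫ h = 𝟙 M) → ∃ h' : X ⟶ E, h' ≫ g = h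

/-- `N ≅ τ M`, the Auslander-Reiten translate of `M` : there is an almost split sequence
`0 ⟶ N ⟶ E ⟶ M ⟶ 0`. -/
def IsTauOf (N M : ModuleCat.{0} A) : Prop :=
  ∃ (E : ModuleCat.{0} A) (f : N ⟶ E) (g : E ⟶ M), IsAlmostSplitSeq A f g

/-- `U ≅ ψ S = τ⁻ top (I S)`. -/
def IsPsiOf (S U : ModuleCat.{0} A) : Prop :=
  ∃ I, IsInjEnvOf A S I ∧ ∃ T, IsSimpleTopOf A I T ∧ IsTauOf A T U

/-- `T ≅ γ S = τ soc (P S)`. -/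
def IsGammaOf (S T : ModuleCat.{0} A) : Prop :=
  ∃ P, IsProjCoverOf A S P ∧ ∃ U, IsSimpleSocOf A P U ∧ IsTauOf A T U

/-- `T ≅ φ S = top (I S)`. -/
def IsPhiOf (S T : ModuleCat.{0} A) : Prop :=
  ∃ I, IsInjEnvOf A S I ∧ IsSimpleTopOf A I T

/-- There is a `ψ`-path `(S_1, …, S_m)` of cardinality `m` ending in `S`. -/
def PsiPathTo (m : ℕ) (S : ModuleCat.{0} A) : Prop :=
  1 ≤ m ∧ ∃ c : ℕ → ModuleCat.{0} A,
    (∀ i < m, IsSimpleModule A ↥(c i)) ∧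
    (∀ i, i + 1 < m → IsPsiOf A (c i) (c (i + 1))) ∧
    Nonempty (c (m - 1) ≅ S)

/-- `a(S)`: the supremum of the cardinalities of `ψ`-paths ending in `S`. -/
def aVal (S : ModuleCat.{0} A) : ℕ∞ :=
  sSup {d : ℕ∞ | ∃ m : ℕ, d = m ∧ PsiPathTo A m S}

/-- `a(A)`: the maximum of `a(S)` over the simple modules which are not `ψ`-cyclic. -/
def aAlg : ℕ∞ :=
  sSup {d : ℕ∞ | ∃ S : ModuleCat.{0} A, IsSimpleModule A ↥S ∧ aVal A S ≠ ⊤ ∧ aVal A S = d}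

/-- `S` is a composition factor of `M`: a simple subquotient of `M`. -/
def IsCompFactorOf (S M : ModuleCat.{0} A) : Prop :=
  IsSimpleModule A ↥S ∧ ∃ N' N : Submodule A ↥M, N' ≤ N ∧
    Nonempty ((↥N ⧸ N'.comap N.subtype) ≃ₗ[A] ↥S)

/-- `e(S) = min {pd S, pd (I S)} = x`. -/
def ERelVal (S : ModuleCat.{0} A) (x : ℕ∞) : Prop :=
  ∃ I, IsInjEnvOf A S I ∧ x = min (projDim A S) (projDim A I)

/-- `e*(S) = min {id S, id (P S)} = x`. -/
def EStarVal (S : ModuleCat.{0} A) (x : ℕ∞) : Prop :=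
  ∃ P, IsProjCoverOf A S P ∧ x = min (injDim A S) (injDim A P)

/-- `T = h(S) = top (Ω^{e(S)} N S)`, the homological permutation. -/
def HRel (S T : ModuleCat.{0} A) : Prop :=
  IsSimpleModule A ↥S ∧ IsSimpleModule A ↥T ∧
  ∃ z : ℕ, ERelVal A S z ∧
    ∃ N, ((Odd z ∧ N = S) ∨ (Even z ∧ IsInjEnvOf A S N)) ∧
      ∃ X, IsNthSyzygy A z N X ∧ IsSimpleTopOf A X T

/-- `S = h*(T) = soc (Σ^{e*(T)} N* T)`, the inverse homological permutation. -/
def HStarRel (T S : ModuleCat.{0} A) : Prop :=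
  IsSimpleModule A ↥T ∧ IsSimpleModule A ↥S ∧
  ∃ z : ℕ, EStarVal A T z ∧
    ∃ N, ((Odd z ∧ N = T) ∨ (Even z ∧ IsProjCoverOf A T N)) ∧
      ∃ X, IsNthCosyzygy A z N X ∧ IsSimpleSocOf A X S

/-- The `t`-fold relational iterate of a relation on modules (up to isomorphism). -/
def IterRel (r : ModuleCat.{0} A → ModuleCat.{0} A → Prop) :
    ℕ → ModuleCat.{0} A → ModuleCat.{0} A → Prop
  | 0, X, Y => Nonempty (X ≅ Y)
  | n + 1, X, Y => ∃ Z, r X Z ∧ IterRel r n Z Y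

end ArtinAlg

/-!
Let `0 → X → M → N → 0` be exact with `M` finitely generated and `pd M ≤ n`. Replacing the sequence
by the sequence of syzygies supplied by the horseshoe lemma lowers `pd M`, and once `M` is
projective, comparing it with a projective cover of `N` exhibits `X` as a direct summand of
`M ⊕ Ω N`. Hence `Ω^n X` lies in `add (A ⊕ Ω^{n+1} N)`, and `del X ≤ pd M`. In the inductive step
only kernels of projective covers are taken on the outer terms; the kernel in the middle is that of
an arbitrary epimorphism from a projective, which is harmless because only its projective dimension
matters.

Over a left artinian ring `A`, Baer's criterion and the finite length of `A ⧸ I` show that `id M`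
is detected by the groups `Ext (S, M)` with `S` simple. If `id M ≤ n + 1` and `del A ≤ n`, then for
`S` simple and `d = del S` the group `Ext^{n+1} (S, M) ≅ Ext^{n+1-d} (Ω^d S, M)` is a direct
summand of a power of some `Ext^{n+2} (M', M) = 0`, so that `id M ≤ n`. Descending, `id M` drops to
at most `del A` as soon as it is finite.
-/

namespace ArtinAlg

open Abelian

universe w u v

variable {C : Type*} [Category* C] [Abelian C]

section ShortExact

variable {S₁ S₂ : ShortComplex C}

theorem shortExact_kernel_ι {X Y : C} (f : X ⟶ Y) [Epi f] :
    (ShortComplex.mk _ _ (kernel.condition f)).ShortExact :=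
  { exact := ShortComplex.exact_kernel f }

theorem shortExact_cokernel_π {X Y : C} (f : X ⟶ Y) [Mono f] :
    (ShortComplex.mk _ _ (cokernel.condition f)).ShortExact :=
  { exact := ShortComplex.exact_cokernel f }

theorem shortExact_kernel_map (φ : S₁ ⟶ S₂) [Epi φ.τ₁] (h₁ : S₁.ShortExact) (h₂ : S₂.Exact)
    [Mono S₂.f] :
    (ShortComplex.mk (kernel.map φ.τ₁ φ.τ₂ S₁.f S₂.f φ.comm₁₂)
      (kernel.map φ.τ₂ φ.τ₃ S₁.g S₂.g φ.comm₂₃) (by ext; simp)).ShortExact := by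
  have := h₁.mono_f
  have := h₁.epi_g
  refine { exact := ?_, mono_f := ?_, epi_g := ?_ }
  · rw [ShortComplex.exact_iff_exact_up_to_refinements]
    intro T x hx
    have hxg : (x ≫ kernel.ι φ.τ₂) ≫ S₁.g = 0 := by simpa using hx =≫ kernel.ι φ.τ₃
    have hxτ : h₁.exact.lift (x ≫ kernel.ι φ.τ₂) hxg ≫ φ.τ₁ = 0 := by
      simp [← cancel_mono S₂.f, φ.comm₁₂]
    refine ⟨T, 𝟙 T, inferInstance, kernel.lift φ.τ₁ _ hxτ, ?_⟩
    simp [← cancel_mono (kernel.ι φ.τ₂)]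
  · have : Mono (kernel.ι φ.τ₁ ≫ S₁.f) := mono_comp _ _
    exact mono_of_mono_fac (kernel.lift_ι _ _ _)
  · rw [epi_iff_surjective_up_to_refinements]
    intro T z
    obtain ⟨T', p, _, x, hx⟩ := surjective_up_to_refinements_of_epi S₁.g (z ≫ kernel.ι φ.τ₃)
    have hxg : (x ≫ φ.τ₂) ≫ S₂.g = 0 := by
      rw [Category.assoc, φ.comm₂₃, ← reassoc_of% hx, kernel.condition, comp_zero, comp_zero]
    obtain ⟨T'', q, _, y, hy⟩ := surjective_up_to_refinements_of_epi φ.τ₁ (h₂.lift _ hxg)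
    have hxy : (q ≫ x - y ≫ S₁.f) ≫ φ.τ₂ = 0 := by
      rw [Preadditive.sub_comp, Category.assoc, Category.assoc, ← φ.comm₁₂, ← reassoc_of% hy,
        h₂.lift_f, sub_self]
    refine ⟨T'', q ≫ p, epi_comp _ _, kernel.lift φ.τ₂ _ hxy, ?_⟩
    simp [← cancel_mono (kernel.ι φ.τ₃), hx]

theorem exists_horseshoe {S : ShortComplex C} (hS : S.ShortExact) {P₁ P₃ : C}
    [Projective P₃] (π₁ : P₁ ⟶ S.X₁) (π₃ : P₃ ⟶ S.X₃) [Epi π₁] [Epi π₃] :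
    ∃ (π₂ : P₁ ⊞ P₃ ⟶ S.X₂) (f : kernel π₁ ⟶ kernel π₂) (g : kernel π₂ ⟶ kernel π₃)
      (w : f ≫ g = 0), Epi π₂ ∧ (ShortComplex.mk f g w).ShortExact := by
  have := hS.mono_f
  have := hS.epi_g
  let φ : ShortComplex.mk (biprod.inl : P₁ ⟶ P₁ ⊞ P₃) biprod.snd biprod.inl_snd ⟶ S :=
    { τ₁ := π₁
      τ₂ := biprod.desc (π₁ ≫ S.f) (Projective.factorThru π₃ S.g)
      τ₃ := π₃ }
  have hsplit := (ShortComplex.Splitting.ofHasBinaryBiproduct P₁ P₃).shortExact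
  have : Epi φ.τ₁ := ‹Epi π₁›
  have : Epi φ.τ₃ := ‹Epi π₃›
  exact ⟨φ.τ₂, _, _, _, ShortComplex.epi_τ₂_of_exact_of_epi φ hS.exact,
    shortExact_kernel_map φ hsplit hS.exact⟩

theorem nonempty_retract_biprod_kernel {S : ShortComplex C} (hS : S.ShortExact)
    [Projective S.X₂] {P : C} [Projective P] (π : P ⟶ S.X₃) [Epi π] :
    Nonempty (Retract S.X₁ (S.X₂ ⊞ kernel π)) := by
  have := hS.mono_f
  have := hS.epi_g
  let l : P ⟶ S.X₂ := Projective.factorThru π S.g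
  let s : S.X₂ ⟶ P := Projective.factorThru S.g π
  have hs : s ≫ π = S.g := Projective.factorThru_comp _ _
  have hl : l ≫ S.g = π := Projective.factorThru_comp _ _
  exact ⟨{
    i := biprod.lift S.f (kernel.lift π (S.f ≫ s) (by simp [hs]))
    r := biprod.desc (hS.exact.lift (𝟙 _ - s ≫ l) (by simp [hs, hl]))
      (hS.exact.lift (kernel.ι π ≫ l) (by simp [hl]))
    retract := by simp [← cancel_mono S.f] }⟩

end ShortExact

section Ext

variable [HasExt.{w} C]

theorem subsingleton_ext_of_retract {X Y : C} (h : Retract X Y) (Z : C) (n : ℕ)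
    [Subsingleton (Ext Y Z n)] : Subsingleton (Ext X Z n) := by
  refine Function.Injective.subsingleton
    (f := fun e : Ext X Z n ↦ (Ext.mk₀ h.r).comp e (zero_add n))
    (Function.LeftInverse.injective (g := fun e ↦ (Ext.mk₀ h.i).comp e (zero_add n)) fun e ↦ ?_)
  simp

theorem subsingleton_ext_congr_left {X Y : C} (e : X ≅ Y) (Z : C) (n : ℕ) :
    Subsingleton (Ext X Z n) ↔ Subsingleton (Ext Y Z n) :=
  ⟨fun _ ↦ subsingleton_ext_of_retract (.ofIso e.symm) Z n,
    fun _ ↦ subsingleton_ext_of_retract (.ofIso e) Z n⟩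

variable {S : ShortComplex C}

theorem subsingleton_ext_X₂ (hS : S.ShortExact) (Y : C) (n : ℕ)
    [Subsingleton (Ext S.X₁ Y n)] [Subsingleton (Ext S.X₃ Y n)] :
    Subsingleton (Ext S.X₂ Y n) := by
  refine subsingleton_of_forall_eq 0 fun x₂ ↦ ?_
  obtain ⟨x₃, rfl⟩ := Ext.contravariant_sequence_exact₂ hS _ x₂ (Subsingleton.elim _ _)
  rw [Subsingleton.elim x₃ 0, Ext.comp_zero]

theorem subsingleton_ext_X₁_iff (hS : S.ShortExact) [Projective S.X₂] (Y : C) (n : ℕ) :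
    Subsingleton (Ext S.X₁ Y (n + 1)) ↔ Subsingleton (Ext S.X₃ Y (n + 2)) := by
  constructor
  · refine fun _ ↦ subsingleton_of_forall_eq 0 fun x₃ ↦ ?_
    obtain ⟨x₁, rfl⟩ := Ext.contravariant_sequence_exact₃ hS _ x₃ (Ext.eq_zero_of_projective _)
      (add_comm 1 (n + 1))
    rw [Subsingleton.elim x₁ 0, Ext.comp_zero]
  · refine fun _ ↦ subsingleton_of_forall_eq 0 fun x₁ ↦ ?_
    obtain ⟨x₂, rfl⟩ := Ext.contravariant_sequence_exact₁ hS _ x₁ (add_comm 1 (n + 1))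
      (Subsingleton.elim _ _)
    rw [Ext.eq_zero_of_projective x₂, Ext.comp_zero]

theorem subsingleton_ext_X₃ (hS : S.ShortExact) [Injective S.X₂] (X : C) (n : ℕ)
    [Subsingleton (Ext X S.X₁ (n + 2))] : Subsingleton (Ext X S.X₃ (n + 1)) := by
  refine subsingleton_of_forall_eq 0 fun x₃ ↦ ?_
  obtain ⟨x₂, rfl⟩ := Ext.covariant_sequence_exact₃ X hS x₃ rfl (Subsingleton.elim _ _)
  rw [Ext.eq_zero_of_injective x₂, Ext.zero_comp]

end Ext

section Projective

variable {A : Type*} [Ring A]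

-- A lift `h` of `π` along `π|_Q` restricts to a surjective, hence bijective, endomorphism of `Q`,
-- so `Q` is a direct summand of `P`.
theorem exists_projective_superfluous {P M : Type*} [AddCommGroup P] [Module A P]
    [AddCommGroup M] [Module A M] [IsArtinian A P] [IsNoetherian A P] [Module.Projective A P]
    {π : P →ₗ[A] M} (hπ : Function.Surjective π) :
    ∃ Q : Submodule A P, Module.Projective A Q ∧ Q.map π = ⊤ ∧
      ∀ N ≤ Q, N.map π = ⊤ → N = Q := by
  obtain ⟨Q, hQ, hmin⟩ := exists_minimal_of_wellFoundedLT (fun Q : Submodule A P ↦ Q.map π = ⊤)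
    ⟨⊤, by rwa [Submodule.map_top, LinearMap.range_eq_top]⟩
  have hmin' : ∀ N ≤ Q, N.map π = ⊤ → N = Q := fun N hN hNπ ↦ hN.antisymm (hmin hNπ hN)
  refine ⟨Q, ?_, hQ, hmin'⟩
  have hπQ : Function.Surjective (π.domRestrict Q) := by
    rwa [← LinearMap.range_eq_top, LinearMap.range_domRestrict]
  obtain ⟨h, hh⟩ := Module.projective_lifting_property (π.domRestrict Q) π hπQ
  have hsurj : Function.Surjective (h.domRestrict Q) := by
    suffices hrange : (Q.map h).map Q.subtype = Q by
      rw [← LinearMap.range_eq_top, LinearMap.range_domRestrict]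
      exact Submodule.map_injective_of_injective Q.injective_subtype
        (by rw [hrange, Submodule.map_subtype_top])
    refine hmin' _ (Submodule.map_subtype_le _ _) ?_
    rw [← Submodule.map_comp, ← Submodule.map_comp]
    exact (congrArg Q.map hh).trans hQ
  let e : Q ≃ₗ[A] Q := .ofBijective (h.domRestrict Q)
    (IsNoetherian.bijective_of_surjective_endomorphism _ hsurj)
  exact Module.Projective.of_split Q.subtype (e.symm.toLinearMap ∘ₗ h) <|
    LinearMap.ext e.symm_apply_apply

end Projective

section Finite

variable {A : Type*} [Ring A] {M N : ModuleCat.{v} A}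

theorem finite_of_epi (f : M ⟶ N) [Epi f] [Module.Finite A M] : Module.Finite A N :=
  .of_surjective f.hom ((ModuleCat.epi_iff_surjective f).1 ‹_›)

theorem finite_of_mono [IsNoetherianRing A] (f : M ⟶ N) [Mono f] [Module.Finite A N] :
    Module.Finite A M :=
  .of_injective f.hom ((ModuleCat.mono_iff_injective f).1 ‹_›)

theorem finite_biprod [Module.Finite A M] [Module.Finite A N] :
    Module.Finite A (M ⊞ N : ModuleCat.{v} A) :=
  .equiv (ModuleCat.biprodIsoProd M N).toLinearEquiv.symm

end Finite

section InjectiveTest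

variable {A : Type u} [Ring A]

theorem shortExact_subtype_mkQ {N : Type v} [AddCommGroup N] [Module A N] (K : Submodule A N) :
    (ModuleCat.shortComplexOfCompEqZero K.subtype K.mkQ
      (LinearMap.exact_subtype_mkQ K).linearMap_comp_eq_zero).ShortExact :=
  ModuleCat.shortComplex_shortExact _ (LinearMap.exact_subtype_mkQ K) K.injective_subtype
    K.mkQ_surjective

theorem subsingleton_ext_of_isFiniteLength [Small.{v} A] {M : ModuleCat.{v} A} {n : ℕ}
    (h : ∀ S : ModuleCat.{v} A, IsSimpleModule A S → Subsingleton (Ext.{v} S M n))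
    {N : Type v} [AddCommGroup N] [Module A N] (hN : IsFiniteLength A N) :
    Subsingleton (Ext.{v} (ModuleCat.of A N) M n) := by
  induction hN with
  | @of_subsingleton N =>
    have := (ModuleCat.isZero_of_subsingleton (ModuleCat.of A N)).hasProjectiveDimensionLT_zero
    exact HasProjectiveDimensionLT.subsingleton _ 0 n n.zero_le M
  | @of_simple_quotient N _ _ K hK _ ih =>
    have := h (ModuleCat.of A (N ⧸ K)) hK
    exact subsingleton_ext_X₂ (shortExact_subtype_mkQ K) M n

variable [IsArtinianRing A] {M : ModuleCat.{u} A}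

theorem injective_of_subsingleton_ext_simple
    (h : ∀ S : ModuleCat.{u} A, IsSimpleModule A S → Subsingleton (Ext.{u} S M 1)) :
    Injective M := by
  refine (Module.injective_iff_injective_object A M).1 (Module.Baer.injective fun I g ↦ ?_)
  have hI : Subsingleton (Ext.{u} (ModuleCat.of A (A ⧸ I)) M 1) :=
    subsingleton_ext_of_isFiniteLength h
      (isFiniteLength_iff_isNoetherian_isArtinian.2 ⟨inferInstance, inferInstance⟩)
  obtain ⟨x, hx⟩ := Ext.contravariant_sequence_exact₁ (shortExact_subtype_mkQ I) M
    (Ext.mk₀ (ModuleCat.ofHom g)) (zero_add 1) (Subsingleton.elim _ _)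
  obtain ⟨g', rfl⟩ := (Ext.mk₀_bijective _ _).surjective x
  rw [Ext.mk₀_comp_mk₀] at hx
  have hg : ModuleCat.ofHom I.subtype ≫ g' = ModuleCat.ofHom g :=
    (Ext.mk₀_bijective _ _).injective hx
  exact ⟨g'.hom, fun x hxI ↦ ConcreteCategory.congr_hom hg ⟨x, hxI⟩⟩

theorem hasInjectiveDimensionLE_of_subsingleton_ext_simple {n : ℕ}
    (h : ∀ S : ModuleCat.{u} A, IsSimpleModule A S → Subsingleton (Ext.{u} S M (n + 1))) :
    HasInjectiveDimensionLE M n := by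
  induction n generalizing M with
  | zero =>
    have := injective_of_subsingleton_ext_simple h
    infer_instance
  | succ n ih =>
    have hM := shortExact_cokernel_π (Injective.ι M)
    refine (hM.hasInjectiveDimensionLT_X₃_iff n inferInstance).1 (ih fun S hS ↦ ?_)
    have := h S hS
    exact subsingleton_ext_X₃ hM S n

end InjectiveTest

variable {A : Type} [Ring A] {X Y W V M N : ModuleCat.{0} A}

section InAdd

theorem InAdd.of_retract (h : InAdd A Y W) (r : Retract X Y) : InAdd A X W := by
  obtain ⟨n, i, p, hip⟩ := h
  exact ⟨n, r.i ≫ i, p ≫ r.r, by simp [reassoc_of% hip]⟩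

theorem InAdd.mono_right (h : InAdd A X V) (r : Retract V W) : InAdd A X W := by
  obtain ⟨n, i, p, hip⟩ := h
  refine ⟨n, i ≫ ModuleCat.ofHom (r.i.hom.compLeft (Fin n)),
    ModuleCat.ofHom (r.r.hom.compLeft (Fin n)) ≫ p, ?_⟩
  have hr : ModuleCat.ofHom (r.i.hom.compLeft (Fin n)) ≫ ModuleCat.ofHom (r.r.hom.compLeft (Fin n))
      = 𝟙 _ :=
    ModuleCat.hom_ext <| LinearMap.ext fun v ↦ funext fun j ↦
      ConcreteCategory.congr_hom r.retract (v j)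
  rw [Category.assoc, reassoc_of% hr, hip]

theorem InAdd.refl (W : ModuleCat.{0} A) : InAdd A W W :=
  let e := (LinearEquiv.funUnique (Fin 1) A W).toModuleIso
  ⟨1, e.inv, e.hom, e.inv_hom_id⟩

theorem InAdd.biprod (hX : InAdd A X W) (hY : InAdd A Y W) : InAdd A (X ⊞ Y) W := by
  obtain ⟨n, i, p, hip⟩ := hX
  obtain ⟨m, j, q, hjq⟩ := hY
  let e : (ModuleCat.of A (Fin n → W) ⊞ ModuleCat.of A (Fin m → W)) ≅
      ModuleCat.of A (Fin (n + m) → W) :=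
    ModuleCat.biprodIsoProd _ _ ≪≫ ((LinearEquiv.sumArrowLequivProdArrow _ _ A W).symm ≪≫ₗ
      LinearEquiv.funCongrLeft A W finSumFinEquiv.symm).toModuleIso
  refine ⟨n + m, biprod.map i j ≫ e.hom, e.inv ≫ biprod.map p q, ?_⟩
  apply biprod.hom_ext' <;> simp [reassoc_of% hip, reassoc_of% hjq]

theorem inAdd_of_projective [Module.Finite A X] [Projective X] : InAdd A X (ModuleCat.of A A) := by
  obtain ⟨n, π, hπ⟩ := Module.Finite.exists_fin' A X
  have : Epi (ModuleCat.ofHom π) := (ModuleCat.epi_iff_surjective _).2 hπ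
  exact ⟨n, Projective.factorThru (𝟙 X) (ModuleCat.ofHom π), ModuleCat.ofHom π,
    Projective.factorThru_comp _ _⟩

theorem inAdd_prod_of_retract_biprod {P Z : ModuleCat.{0} A} [Module.Finite A P] [Projective P]
    (r : Retract X (P ⊞ Z)) : InAdd A X (ModuleCat.of A (A × Z)) := by
  let e := ModuleCat.biprodIsoProd (ModuleCat.of A A) Z
  have hP : InAdd A P (ModuleCat.of A A ⊞ Z) :=
    inAdd_of_projective.mono_right (BinaryBiproduct.bicone _ _).retract_left
  have hZ : InAdd A Z (ModuleCat.of A A ⊞ Z) :=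
    (InAdd.refl Z).mono_right (BinaryBiproduct.bicone _ _).retract_right
  exact ((hP.biprod hZ).of_retract r).mono_right (.ofIso e)

theorem InAdd.subsingleton_ext (h : InAdd A X W) (n : ℕ) [Subsingleton (Ext.{0} W M n)] :
    Subsingleton (Ext.{0} X M n) := by
  obtain ⟨k, i, p, hip⟩ := h
  have : Subsingleton (Ext.{0} (⨁ fun _ : Fin k ↦ W) M n) :=
    (Ext.biproductAddEquiv (biproduct.isBilimit _) M n).toEquiv.subsingleton
  exact subsingleton_ext_of_retract ((Retract.mk i p hip).trans
    (.ofIso (ModuleCat.biproductIsoPi fun _ : Fin k ↦ W).symm)) M n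

end InAdd

section Dimension

theorem sInf_natCast_le_iff {p : ℕ → Prop} {k : ℕ} :
    sInf {d : ℕ∞ | ∃ n : ℕ, d = n ∧ p n} ≤ k ↔ ∃ n ≤ k, p n := by
  constructor
  · intro h
    have hne : {d : ℕ∞ | ∃ n : ℕ, d = n ∧ p n}.Nonempty := by
      by_contra! hempty
      simp [hempty] at h
    obtain ⟨n, hn, hpn⟩ := csInf_mem hne
    exact ⟨n, by simpa [hn] using h, hpn⟩
  · rintro ⟨n, hnk, hpn⟩
    exact sInf_le_of_le ⟨n, rfl, hpn⟩ (by exact_mod_cast hnk)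

theorem ProjDimLE.hasProjectiveDimensionLE {n : ℕ} (h : ProjDimLE A n M) :
    HasProjectiveDimensionLE M n := by
  induction h with
  | zero M _ => infer_instance
  | succ n M P f _ _ _ ih =>
    exact ((shortExact_kernel_ι f).hasProjectiveDimensionLT_X₃_iff n ‹_›).2 ih

theorem injDimLE_iff {n : ℕ} : InjDimLE A n M ↔ HasInjectiveDimensionLE M n := by
  constructor
  · intro h
    induction h with
    | zero M _ => infer_instance
    | succ n M I f _ _ _ ih =>
      exact ((shortExact_cokernel_π f).hasInjectiveDimensionLT_X₃_iff n ‹_›).1 ih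
  · induction n generalizing M with
    | zero => exact fun h ↦ .zero M (injective_iff_hasInjectiveDimensionLT_one.2 h)
    | succ n ih =>
      intro h
      have hM := shortExact_cokernel_π (Injective.ι M)
      exact .succ n M _ (Injective.ι M) inferInstance inferInstance
        (ih ((hM.hasInjectiveDimensionLT_X₃_iff n inferInstance).2 h))

theorem injDim_le_iff {n : ℕ} : injDim A M ≤ n ↔ HasInjectiveDimensionLE M n := by
  refine sInf_natCast_le_iff.trans ⟨?_, fun h ↦ ⟨n, le_rfl, injDimLE_iff.2 h⟩⟩
  rintro ⟨m, hmn, hm⟩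
  have := injDimLE_iff.1 hm
  exact hasInjectiveDimensionLT_of_ge M (m + 1) (n + 1) (by lia)

end Dimension

section Syzygy

theorem IsProjectiveCoverHom.isSyzygyOf {f : X ⟶ M} (hf : IsProjectiveCoverHom A f) :
    IsSyzygyOf A M (kernel f) :=
  ⟨X, f, hf, ⟨.refl _⟩⟩

theorem IsSyzygyOf.subsingleton_ext_iff (h : IsSyzygyOf A M X) (n : ℕ) :
    Subsingleton (Ext.{0} X N (n + 1)) ↔ Subsingleton (Ext.{0} M N (n + 2)) := by
  obtain ⟨P, f, ⟨_, _, -⟩, ⟨e⟩⟩ := h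
  exact (subsingleton_ext_congr_left e N _).trans
    (subsingleton_ext_X₁_iff (shortExact_kernel_ι f) N n)

theorem IsNthSyzygy.subsingleton_ext_iff {k : ℕ} (h : IsNthSyzygy A k M X) (n : ℕ) :
    Subsingleton (Ext.{0} X N (n + 1)) ↔ Subsingleton (Ext.{0} M N (n + k + 1)) := by
  induction k generalizing M with
  | zero =>
    obtain ⟨e⟩ := h
    exact subsingleton_ext_congr_left e N _
  | succ k ih =>
    obtain ⟨Y, hY, hX⟩ := h
    exact (ih hX).trans (hY.subsingleton_ext_iff (n + k))

theorem DelLE.subsingleton_ext {d n : ℕ} (h : DelLE A d N) (hdn : d < n)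
    [HasInjectiveDimensionLE M n] : Subsingleton (Ext.{0} N M n) := by
  obtain ⟨X, hX, M', -, X', hX', hadd⟩ := h
  obtain ⟨k, rfl⟩ : ∃ k, n = k + d + 1 := ⟨n - d - 1, by lia⟩
  have : Projective (ModuleCat.of A A) := (IsProjective.iff_projective (R := A) A).1 inferInstance
  have hA : Subsingleton (Ext.{0} (ModuleCat.of A A) M (k + 1)) :=
    HasProjectiveDimensionLT.subsingleton _ 1 _ (by lia) M
  have hX'M : Subsingleton (Ext.{0} X' M (k + 1)) :=
    (hX'.subsingleton_ext_iff k).2 (HasInjectiveDimensionLT.subsingleton M _ _ le_rfl M')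
  have hAX' : Subsingleton (Ext.{0} (ModuleCat.of A (A × X')) M (k + 1)) :=
    (subsingleton_ext_congr_left (ModuleCat.biprodIsoProd (ModuleCat.of A A) X') M _).1
      Ext.biprodAddEquiv.toEquiv.subsingleton
  exact (hX.subsingleton_ext_iff k).1 (hadd.subsingleton_ext (k + 1))

end Syzygy

variable [IsArtinianRing A]

theorem exists_isProjectiveCoverHom (M : ModuleCat.{0} A) [Module.Finite A M] :
    ∃ (P : ModuleCat.{0} A) (f : P ⟶ M), Module.Finite A P ∧ IsProjectiveCoverHom A f := by
  obtain ⟨n, π, hπ⟩ := Module.Finite.exists_fin' A M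
  obtain ⟨Q, hQ, hQπ, hmin⟩ := exists_projective_superfluous hπ
  refine ⟨ModuleCat.of A Q, ModuleCat.ofHom (π.domRestrict Q), inferInstanceAs (Module.Finite A Q),
    (IsProjective.iff_projective (R := A) Q).1 hQ, ?_, fun N g hg ↦ ?_⟩
  · rwa [ModuleCat.epi_iff_range_eq_top, ModuleCat.hom_ofHom, LinearMap.range_domRestrict]
  · rw [ModuleCat.epi_iff_range_eq_top] at hg ⊢
    have hrange : g.hom.range.map Q.subtype = Q := by
      refine hmin _ (Submodule.map_subtype_le _ _) ?_
      rw [← hg, ← LinearMap.range_comp, ← LinearMap.range_comp]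
      rfl
    exact Submodule.map_injective_of_injective Q.injective_subtype
      (by rw [hrange, Submodule.map_subtype_top])

theorem exists_isNthSyzygy_inAdd {n : ℕ} {S : ShortComplex (ModuleCat.{0} A)} (hS : S.ShortExact)
    [Module.Finite A S.X₂] [HasProjectiveDimensionLE S.X₂ n] :
    ∃ Y Z, IsNthSyzygy A n S.X₁ Y ∧ IsNthSyzygy A (n + 1) S.X₃ Z ∧
      InAdd A Y (ModuleCat.of A (A × Z)) := by
  induction n generalizing S with
  | zero =>
    have := hS.epi_g
    have := finite_of_epi S.g
    obtain ⟨P, π, _, hπ⟩ := exists_isProjectiveCoverHom S.X₃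
    have := hπ.1
    have := hπ.2.1
    have : Projective S.X₂ := (projective_iff_hasProjectiveDimensionLE_zero _).2 ‹_›
    obtain ⟨r⟩ := nonempty_retract_biprod_kernel hS π
    exact ⟨S.X₁, kernel π, ⟨.refl _⟩, ⟨_, hπ.isSyzygyOf, ⟨.refl _⟩⟩,
      inAdd_prod_of_retract_biprod r⟩
  | succ n ih =>
    have := hS.mono_f
    have := hS.epi_g
    have := finite_of_mono S.f
    have := finite_of_epi S.g
    obtain ⟨P₁, π₁, _, hπ₁⟩ := exists_isProjectiveCoverHom S.X₁
    obtain ⟨P₃, π₃, _, hπ₃⟩ := exists_isProjectiveCoverHom S.X₃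
    have := hπ₁.1
    have := hπ₁.2.1
    have := hπ₃.1
    have := hπ₃.2.1
    obtain ⟨π₂, f, g, w, _, hK⟩ := exists_horseshoe hS π₁ π₃
    have := finite_biprod (M := P₁) (N := P₃)
    have : Module.Finite A (kernel π₂ :) := finite_of_mono (kernel.ι π₂)
    have : HasProjectiveDimensionLE (kernel π₂) n :=
      ((shortExact_kernel_ι π₂).hasProjectiveDimensionLT_X₃_iff n inferInstance).1 ‹_›
    obtain ⟨Y, Z, hY, hZ, hYZ⟩ := ih hK
    exact ⟨Y, Z, ⟨_, hπ₁.isSyzygyOf, hY⟩, ⟨_, hπ₃.isSyzygyOf, hZ⟩, hYZ⟩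

theorem delLE_of_mono {n : ℕ} (f : M ⟶ N) [Mono f] [Module.Finite A N]
    [HasProjectiveDimensionLE N n] : DelLE A n M := by
  obtain ⟨Y, Z, hY, hZ, hYZ⟩ := exists_isNthSyzygy_inAdd (n := n) (shortExact_cokernel_π f)
  exact ⟨Y, hY, cokernel f, finite_of_epi (cokernel.π f), Z, hZ, hYZ⟩

theorem delLevel_le_projDim_of_mono (f : M ⟶ N) [Mono f] [Module.Finite A N] :
    delLevel A M ≤ projDim A N := by
  refine le_sInf ?_
  rintro _ ⟨n, rfl, hn⟩
  have := hn.hasProjectiveDimensionLE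
  exact sInf_le ⟨n, rfl, delLE_of_mono f⟩

theorem injDim_le_of_delAlg_le {n : ℕ} (hdel : delAlg A ≤ n) (hM : injDim A M ≤ (n + 1 : ℕ)) :
    injDim A M ≤ n := by
  have := injDim_le_iff.1 hM
  refine injDim_le_iff.2 (hasInjectiveDimensionLE_of_subsingleton_ext_simple fun S hS ↦ ?_)
  have hdelS : delLevel A S ≤ delAlg A := le_sSup ⟨S, hS, rfl⟩
  obtain ⟨d, hdn, hd⟩ := sInf_natCast_le_iff.1 (hdelS.trans hdel)
  exact hd.subsingleton_ext (Nat.lt_succ_of_le hdn)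

theorem injDim_le_delAlg (hM : injDim A M ≠ ⊤) : injDim A M ≤ delAlg A := by
  obtain ⟨n, hn⟩ := ENat.ne_top_iff_exists.1 hM
  cases n with
  | zero => simp [← hn]
  | succ n =>
    by_contra! hlt
    rw [← hn] at hlt
    have hdel : delAlg A ≤ n := Order.le_of_lt_add_one (by exact_mod_cast hlt)
    have hle := injDim_le_of_delAlg_le hdel hn.ge
    rw [← hn] at hle
    exact absurd (by exact_mod_cast hle) n.not_succ_le_self

theorem bigFinInjDim_le_delAlg : bigFinInjDim A ≤ delAlg A := by
  refine sSup_le ?_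
  rintro _ ⟨M, rfl, hM⟩
  exact injDim_le_delAlg hM

end ArtinAlg

open ArtinAlg in
theorem statement_3_general (A : Type) [Ring A] [IsArtinianRing A]
    (MS : ModuleCat.{0} A → ModuleCat.{0} A)
    (hMS : ∀ S : ModuleCat.{0} A, IsSimpleModule A ↥S →
      Module.Finite A ↥(MS S) ∧ (∃ f : S ⟶ MS S, Mono f) ∧
        projDim A (MS S) ≠ ⊤)
    (d : ℕ∞)
    (hd : d = sSup {x : ℕ∞ |
      ∃ S : ModuleCat.{0} A, IsSimpleModule A ↥S ∧ x = projDim A (MS S)}) :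
    bigFinInjDim A ≤ delAlg A ∧ delAlg A ≤ d ∧ d ≤ finProDim A := by
  subst hd
  refine ⟨bigFinInjDim_le_delAlg, sSup_le ?_, sSup_le ?_⟩
  · rintro _ ⟨S, hS, rfl⟩
    obtain ⟨_, ⟨f, _⟩, -⟩ := hMS S hS
    exact (delLevel_le_projDim_of_mono f).trans (le_sSup ⟨S, hS, rfl⟩)
  · rintro _ ⟨S, hS, rfl⟩
    obtain ⟨hfin, -, hpd⟩ := hMS S hS
    exact le_sSup ⟨MS S, hfin, rfl, hpd⟩

open ArtinAlg in
/-- Let `A` be an artin algebra and assume that every simple module `S`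
is a submodule of a finitely generated module `M_S` of finite projective dimension.
Let `d = max_S pd M_S`. Then `Fin-inj A ≤ del A ≤ d ≤ fin-pro A`. -/
theorem statement_3 (R : Type) [CommRing R] [IsArtinianRing R]
    (A : Type) [Ring A] [Algebra R A] [Module.Finite R A]
    (MS : ModuleCat.{0} A → ModuleCat.{0} A)
    (hMS : ∀ S : ModuleCat.{0} A, IsSimpleModule A ↥S →
      Module.Finite A ↥(MS S) ∧ (∃ f : S ⟶ MS S, CategoryTheory.Mono f) ∧
        projDim A (MS S) ≠ ⊤)
    (d : ℕ∞)
    (hd : d = sSup {x : ℕ∞ |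
      ∃ S : ModuleCat.{0} A, IsSimpleModule A ↥S ∧ x = projDim A (MS S)}) :
    bigFinInjDim A ≤ delAlg A ∧ delAlg A ≤ d ∧ d ≤ finProDim A := by
  have : IsArtinianRing A := IsArtinianRing.of_finite R A
  exact statement_3_general A MS hMS d hd
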